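/- arXiv:2111.07399 — 2 statements merged into one kernel-verified Lean document; each statement's English description precedes it below -/
import Mathlib

section
/- Let G be a connected graph on ℕ with uniformly bounded degree and deg(i) ≥ 1 for all i. If G is a regular or a biregular graph, then there exist scalars α_i ≠ 0 and a bijection π : ℕ → ℕ such that f(δ_i) = α_i δ_{π(i)} defines an isomorphism of Hilbert evolution algebras from A_RW(G) to A(G), and the linear isometric equivalence U of ℓ²(ℕ) determined by U(δ_i) = δ_{π(i)} is a unitary isomorphism of Hilbert evolution algebras from ℓ²(ℕ) with the product (v ·̃ w)_k = ∑_i v_i w_i (α_k/α_i²)(a_{ki}/deg(i)) onto A(G), i.e. U(v ·̃ w) = U(v) ⋆ U(w) for all v, w. Conversely, if in addition G is non-singular (the bounded adjacency operator A has trivial kernel) and there exists an isomorphism of Hilbert evolution algebras from A_RW(G) to A(G) of the form f(δ_i) = α_i δ_{π(i)} with α_i ≠ 0 and π a bijection, then G is a regular or a biregular graph. -/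
/-!
Since `δ_i ⋆ δ_j = 0` for `i ≠ j`, an operator `f(δ_i) = α_i δ_{π(i)}` is multiplicative from
`A_RW(G)` to `A(G)` exactly when `α_i² a_{π(k)π(i)} = α_k a_{ki} / deg(i)` for all `i, k`. As the
entries of `a` are `0` or `1`, this forces `α_k = α_i² deg(i)` along every edge.

In particular all neighbours of a vertex carry the same value of `α`, so on a connected graph `α`
takes at most two values, alternating along edges; since `deg(i) = α_k / α_i²`, the degrees
alternate too. Conversely, positive solutions of the edge relation are `α = 1/d` on a `d`-regular
graph and, on a biregular one, `x` and `y` on the two sides, where `y = x² d₁` and `x = y² d₂`, i.e.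
`x³ = 1/(d₁² d₂)`. For such `α` one may take `π = id`, and then the twisted product is `⋆` itself.
-/

noncomputable section
open scoped ENNReal

/-- The real Hilbert space ℓ²(ℕ) of square-summable sequences. -/
abbrev l2 : Type := lp (fun _ : ℕ => ℝ) 2

/-- The degree of vertex `i` in the graph with adjacency coefficients `a`. -/
def deg (a : ℕ → ℕ → ℝ) (i : ℕ) : ℝ := ∑' k, a k i

/-- `a` is the adjacency function of a simple graph (0/1-valued, symmetric, no loops). -/
def SimpleAdj (a : ℕ → ℕ → ℝ) : Prop :=
  (∀ k i, a k i = 0 ∨ a k i = 1) ∧ (∀ k i, a k i = a i k) ∧ (∀ i, a i i = 0)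

/-- The graph is connected: any two vertices are joined by a finite path of edges. -/
def Connected (a : ℕ → ℕ → ℝ) : Prop :=
  ∀ i j : ℕ, Relation.ReflTransGen (fun x y => a x y = 1) i j

/-- The graph is locally finite: every degree series converges. -/
def GraphLocallyFinite (a : ℕ → ℕ → ℝ) : Prop := ∀ i, Summable fun k => a k i

/-- The graph has uniformly bounded degree. -/
def UnifBoundedDegree (a : ℕ → ℕ → ℝ) : Prop := ∃ M > 0, ∀ i, deg a i ≤ M

/-- The graph is regular: all degrees are equal. -/
def GraphRegular (a : ℕ → ℕ → ℝ) : Prop := ∃ d : ℝ, ∀ i, deg a i = d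

/-- The graph is biregular: the vertex set splits as `V₁ ⊔ V₂` with every edge joining `V₁`
to `V₂` and constant degrees `d₁` on `V₁` and `d₂` on `V₂`. -/
def GraphBiregular (a : ℕ → ℕ → ℝ) : Prop :=
  ∃ (V₁ : Set ℕ) (d₁ d₂ : ℝ),
    (∀ i ∈ V₁, deg a i = d₁) ∧ (∀ i ∉ V₁, deg a i = d₂) ∧
    ∀ i k, a k i = 1 → ((i ∈ V₁ ∧ k ∉ V₁) ∨ (i ∉ V₁ ∧ k ∈ V₁))

/-- `p` is the product `v ⋆ w` in the Hilbert evolution algebra `A(G)`: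
`p_k = ∑_i v_i w_i a_{ki}` with all series convergent. -/
def IsStarProd (a : ℕ → ℕ → ℝ) (v w p : l2) : Prop :=
  (∀ k, Summable fun i => v i * w i * a k i) ∧
  ∀ k, p k = ∑' i, v i * w i * a k i

/-- `p` is the product `v ∘ w` in the Hilbert evolution algebra `A_RW(G)`:
`p_k = ∑_i v_i w_i a_{ki}/deg(i)` with all series convergent. -/
def IsRWProd (a : ℕ → ℕ → ℝ) (v w p : l2) : Prop :=
  (∀ k, Summable fun i => v i * w i * (a k i / deg a i)) ∧
  ∀ k, p k = ∑' i, v i * w i * (a k i / deg a i)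

/-- The graph is non-singular: the adjacency operator `(A v)_k = ∑_i a_{ki} v_i` on ℓ²(ℕ)
has trivial kernel. -/
def NonSingular (a : ℕ → ℕ → ℝ) : Prop :=
  ∀ v : l2, (∀ k, ∑' i, a k i * v i = 0) → v = 0

/-- The standard orthonormal basis vector `δ_i` of ℓ²(ℕ). -/
def delta (i : ℕ) : l2 := lp.single 2 i (1 : ℝ)

/-- `p` is the product `v ·̃ w` on ℓ²(ℕ) with the twisted structure constants
`c̃_{ki} = (α_k/α_i²)·(a_{ki}/deg(i))`: `p_k = ∑_i v_i w_i c̃_{ki}`. -/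
def IsTildeProd (a : ℕ → ℕ → ℝ) (α : ℕ → ℝ) (v w p : l2) : Prop :=
  (∀ k, Summable fun i => v i * w i * (α k / α i ^ 2 * (a k i / deg a i))) ∧
  ∀ k, p k = ∑' i, v i * w i * (α k / α i ^ 2 * (a k i / deg a i))

section EvolutionProduct

variable {ι κ 𝕜 : Type*} [NontriviallyNormedField 𝕜] {p : ℝ≥0∞}

/-- `u` is the product of `v` and `w` in the evolution algebra on `ℓᵖ(ι)` with structure constants
`c`, all series converging. The products `⋆`, `∘` and `·̃` are the special cases
`c k i = a k i`, `a k i / deg a i` and `α k / α i ^ 2 * (a k i / deg a i)`. -/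
def IsEvolutionProd (c : ι → ι → 𝕜) (v w u : lp (fun _ : ι => 𝕜) p) : Prop :=
  (∀ k, Summable fun i => v i * w i * c k i) ∧ ∀ k, u k = ∑' i, v i * w i * c k i

namespace IsEvolutionProd

variable {c : ι → ι → 𝕜} {v w u u' : lp (fun _ : ι => 𝕜) p}

lemma unique (h : IsEvolutionProd c v w u) (h' : IsEvolutionProd c v w u') : u = u' :=
  lp.ext <| funext fun k => (h.2 k).trans (h'.2 k).symm

lemma map (h : IsEvolutionProd c v w u) {c' : κ → κ → 𝕜} {π : ι ≃ κ} {α : ι → 𝕜}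
    {f : lp (fun _ : ι => 𝕜) p → lp (fun _ : κ => 𝕜) p} (hf : ∀ v k, f v (π k) = α k * v k)
    (hc : ∀ k i, α i ^ 2 * c' (π k) (π i) = α k * c k i) :
    IsEvolutionProd c' (f v) (f w) (f u) := by
  have hterm (k i : ι) :
      f v (π i) * f w (π i) * c' (π k) (π i) = α k * (v i * w i * c k i) := by
    rw [hf, hf]
    linear_combination v i * w i * hc k i
  refine ⟨π.forall_congr_right.mp fun k => ?_, π.forall_congr_right.mp fun k => ?_⟩
  · rw [← π.summable_iff]
    exact ((h.1 k).mul_left (α k)).congr fun i => (hterm k i).symm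
  · rw [hf, h.2, ← tsum_mul_left]
    exact (tsum_congr fun i => (hterm k i).symm).trans
      (π.tsum_eq fun i => f v i * f w i * c' (π k) i)

lemma single [DecidableEq ι] {i : ι} {x y : 𝕜} (hu : ∀ k, u k = x * y * c k i) :
    IsEvolutionProd c (lp.single p i x) (lp.single p i y) u := by
  have hsum (k : ι) : HasSum (fun j => (lp.single p i x : lp (fun _ : ι => 𝕜) p) j *
      (lp.single p i y : lp (fun _ : ι => 𝕜) p) j * c k j) (x * y * c k i) := by
    convert hasSum_single i fun j hj => ?_ using 1
    · simp only [lp.single_apply_self]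
    · simp only [lp.single_apply_ne _ _ _ hj, zero_mul]
  exact ⟨fun k => (hsum k).summable, fun k => (hu k).trans (hsum k).tsum_eq.symm⟩

end IsEvolutionProd

variable [DecidableEq ι] [DecidableEq κ] [Fact (1 ≤ p)] {π : ι → κ} {α : ι → 𝕜}
  {f : lp (fun _ : ι => 𝕜) p →L[𝕜] lp (fun _ : κ => 𝕜) p}

lemma apply_eq_mul_of_apply_single (hp : p ≠ ∞) (hπ : π.Injective)
    (hf : ∀ i, f (lp.single p i 1) = α i • lp.single p (π i) 1)
    (v : lp (fun _ : ι => 𝕜) p) (k : ι) : f v (π k) = α k * v k := by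
  suffices (lp.evalCLM 𝕜 (fun _ : κ => 𝕜) p (π k)).comp f =
      α k • lp.evalCLM 𝕜 (fun _ : ι => 𝕜) p k from DFunLike.congr_fun this v
  refine lp.ext_continuousLinearMap hp fun i => ContinuousLinearMap.ext_ring ?_
  change f (lp.single p i 1) (π k) = α k * (lp.single p i 1 : lp (fun _ : ι => 𝕜) p) k
  rw [hf, lp.coeFn_smul, Pi.smul_apply, smul_eq_mul]
  obtain rfl | hik := eq_or_ne k i
  · simp only [lp.single_apply_self]
  · simp only [lp.single_apply_ne _ _ _ hik, lp.single_apply_ne _ _ _ (hπ.ne hik), mul_zero]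

lemma structureConst_eq_of_mul_preserving {c : ι → ι → 𝕜} {c' : κ → κ → 𝕜} (hp : p ≠ ∞)
    (hπ : π.Injective) (hc : ∀ i, Memℓp (fun k => c k i) p)
    (hc' : ∀ i, Memℓp (fun k => c' k i) p)
    (hf : ∀ i, f (lp.single p i 1) = α i • lp.single p (π i) 1)
    (hmul : ∀ v w u q, IsEvolutionProd c v w u → IsEvolutionProd c' (f v) (f w) q → f u = q)
    (k i : ι) : α i ^ 2 * c' (π k) (π i) = α k * c k i := by
  have hf' : f (lp.single p i 1) = lp.single p (π i) (α i) := by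
    rw [hf, ← lp.single_smul, smul_eq_mul, mul_one]
  let column : lp (fun _ : ι => 𝕜) p := ⟨fun k => c k i, hc i⟩
  let column' : lp (fun _ : κ => 𝕜) p := ⟨fun k => c' k (π i), hc' (π i)⟩
  have hsq : IsEvolutionProd c (lp.single p i 1) (lp.single p i 1) column :=
    .single fun k => by rw [one_mul, one_mul]
  have hsq' : IsEvolutionProd c' (f (lp.single p i 1)) (f (lp.single p i 1))
      (α i ^ 2 • column') := by
    rw [hf']
    exact .single fun k => by rw [← sq]; rfl
  have himage : f column = α i ^ 2 • column' := hmul _ _ _ _ hsq hsq'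
  calc α i ^ 2 * c' (π k) (π i) = f column (π k) := by rw [himage]; rfl
    _ = α k * c k i := apply_eq_mul_of_apply_single hp hπ hf column k

end EvolutionProduct

section DiagonalOperator

variable {ι 𝕜 : Type*} {E : ι → Type*} [NontriviallyNormedField 𝕜]
  [∀ i, NormedAddCommGroup (E i)] [∀ i, NormedSpace 𝕜 (E i)]

lemma exists_diagonal_continuousLinearEquiv (p : ℝ≥0∞) [Fact (1 ≤ p)] {α : ι → 𝕜} {m M : ℝ}
    (hm : 0 < m) (hmα : ∀ i, m ≤ ‖α i‖) (hαM : ∀ i, ‖α i‖ ≤ M) :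
    ∃ f : lp E p ≃L[𝕜] lp E p, ∀ v i, f v i = α i • v i := by
  have hα (i : ι) : α i ≠ 0 := norm_pos_iff.mp (hm.trans_le (hmα i))
  have hsmul (c : 𝕜) (i : ι) : ‖c • ContinuousLinearMap.id 𝕜 (E i)‖ ≤ ‖c‖ :=
    (norm_smul_le _ _).trans
      (mul_le_of_le_one_right (norm_nonneg c) ContinuousLinearMap.norm_id_le)
  have hbound (i : ι) : ‖α i • ContinuousLinearMap.id 𝕜 (E i)‖ ≤ max M 0 :=
    (hsmul _ i).trans (le_max_of_le_left (hαM i))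
  have hbound_inv (i : ι) : ‖(α i)⁻¹ • ContinuousLinearMap.id 𝕜 (E i)‖ ≤ m⁻¹ :=
    (hsmul _ i).trans ((norm_inv (α i)).trans_le (inv_anti₀ hm (hmα i)))
  exact ⟨ContinuousLinearEquiv.equivOfInverse
    (lp.mapCLM p _ (le_max_right M 0) hbound) (lp.mapCLM p _ (inv_nonneg.mpr hm.le) hbound_inv)
    (fun v => lp.ext <| funext fun i => inv_smul_smul₀ (hα i) (v i))
    (fun v => lp.ext <| funext fun i => smul_inv_smul₀ (hα i) (v i)), fun _ _ => rfl⟩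

lemma apply_single_of_diagonal [DecidableEq ι] {p : ℝ≥0∞} {α : ι → 𝕜} {f : lp E p → lp E p}
    (hf : ∀ v i, f v i = α i • v i) (i : ι) (x : E i) :
    f (lp.single p i x) = α i • lp.single p i x := by
  ext k
  rw [hf, lp.coeFn_smul, Pi.smul_apply]
  obtain rfl | hki := eq_or_ne k i
  · rfl
  · rw [lp.single_apply_ne _ _ _ hki, smul_zero, smul_zero]

end DiagonalOperator

section Graph

variable {a : ℕ → ℕ → ℝ}

lemma exists_neighbor (hconn : Connected a) (i : ℕ) : ∃ k, a k i = 1 := by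
  obtain hi | ⟨k, -, hki⟩ := (hconn (i + 1) i).cases_tail
  · exact absurd hi i.lt_succ_self.ne
  · exact ⟨k, hki⟩

lemma deg_pos (h01 : ∀ k i, a k i = 0 ∨ a k i = 1) (hlf : GraphLocallyFinite a) {i k : ℕ}
    (hki : a k i = 1) : 0 < deg a i := by
  have hnonneg (j : ℕ) : 0 ≤ a j i := by rcases h01 j i with h | h <;> simp [h]
  exact (hlf i).tsum_pos hnonneg k (hki ▸ one_pos)

lemma memℓp_adj_column (h01 : ∀ k i, a k i = 0 ∨ a k i = 1) (hlf : GraphLocallyFinite a) (i : ℕ) :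
    Memℓp (fun k => a k i) 2 := by
  refine memℓp_gen ((hlf i).congr fun k => ?_)
  rcases h01 k i with h | h <;> simp [h]

lemma exists_alternating_values {β : Type*} {g : ℕ → β} (hsymm : ∀ k i, a k i = a i k)
    (hconn : Connected a) (hg : ∀ i j k, a i k = 1 → a j k = 1 → g i = g j) :
    ∃ x y, ∀ i, (g i = x ∧ ∀ k, a k i = 1 → g k = y) ∨ (g i = y ∧ ∀ k, a k i = 1 → g k = x) := by
  obtain ⟨n, hn⟩ := exists_neighbor hconn 0
  refine ⟨g 0, g n, fun i => ?_⟩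
  induction hconn 0 i with
  | refl => exact .inl ⟨rfl, fun k hk => hg k n 0 hk hn⟩
  | @tail i j _ hij ih =>
    have hneighbors (k : ℕ) (hk : a k j = 1) : g k = g i := hg k i j hk hij
    have hji : a j i = 1 := hsymm j i ▸ hij
    rcases ih with ⟨hi, hnext⟩ | ⟨hi, hnext⟩
    · exact .inr ⟨hnext j hji, fun k hk => (hneighbors k hk).trans hi⟩
    · exact .inl ⟨hnext j hji, fun k hk => (hneighbors k hk).trans hi⟩

/-- The edge relation `α_k = α_i² deg(i)` for all adjacent `i, k`: the condition that
multiplicativity of `f(δ_i) = α_i δ_{π(i)}` from `A_RW(G)` to `A(G)` imposes on `α`. -/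
def IsEdgeScaling (a : ℕ → ℕ → ℝ) (α : ℕ → ℝ) : Prop :=
  ∀ i k, a k i = 1 → α k = α i ^ 2 * deg a i

lemma isEdgeScaling_of_structureConst_eq {π : Equiv.Perm ℕ} {α : ℕ → ℝ}
    (h01 : ∀ k i, a k i = 0 ∨ a k i = 1) (hlf : GraphLocallyFinite a) (hα : ∀ i, α i ≠ 0)
    (hc : ∀ k i, α i ^ 2 * a (π k) (π i) = α k * (a k i / deg a i)) : IsEdgeScaling a α := by
  intro i k hki
  have hdeg : deg a i ≠ 0 := (deg_pos h01 hlf hki).ne'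
  have hedge : α i ^ 2 * a (π k) (π i) = α k / deg a i := by rw [hc, hki, mul_one_div]
  have hadj : a (π k) (π i) = 1 := (h01 _ _).resolve_left fun h =>
    div_ne_zero (hα k) hdeg (by rw [← hedge, h, mul_zero])
  rwa [hadj, mul_one, eq_div_iff hdeg, eq_comm] at hedge

namespace IsEdgeScaling

variable {α : ℕ → ℝ}

lemma deg_eq (h : IsEdgeScaling a α) {i k : ℕ} (hi : α i ≠ 0) (hki : a k i = 1) :
    deg a i = α k / α i ^ 2 := by
  rw [h i k hki, mul_div_cancel_left₀ _ (pow_ne_zero 2 hi)]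

lemma structureConst_eq (h : IsEdgeScaling a α) (h01 : ∀ k i, a k i = 0 ∨ a k i = 1)
    (hlf : GraphLocallyFinite a) (k i : ℕ) : α i ^ 2 * a k i = α k * (a k i / deg a i) := by
  rcases h01 k i with hki | hki
  · rw [hki, zero_div, mul_zero, mul_zero]
  · rw [hki, h i k hki, mul_one, mul_one_div, mul_div_cancel_right₀ _ (deg_pos h01 hlf hki).ne']

lemma isStarProd_of_isRWProd (h : IsEdgeScaling a α) (h01 : ∀ k i, a k i = 0 ∨ a k i = 1)
    (hlf : GraphLocallyFinite a) {f : l2 → l2} (hf : ∀ v i, f v i = α i * v i) {v w u : l2}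
    (hu : IsRWProd a v w u) : IsStarProd a (f v) (f w) (f u) :=
  IsEvolutionProd.map (π := .refl ℕ) hu hf (h.structureConst_eq h01 hlf)

lemma isStarProd_of_isTildeProd (h : IsEdgeScaling a α) (hα : ∀ i, α i ≠ 0)
    (h01 : ∀ k i, a k i = 0 ∨ a k i = 1) (hlf : GraphLocallyFinite a) {v w u : l2}
    (hu : IsTildeProd a α v w u) : IsStarProd a v w u := by
  have htilde (k i : ℕ) : α k / α i ^ 2 * (a k i / deg a i) = a k i := by
    rw [div_mul_eq_mul_div, ← h.structureConst_eq h01 hlf,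
      mul_div_cancel_left₀ _ (pow_ne_zero 2 (hα i))]
  simp only [IsTildeProd, htilde] at hu
  exact hu

lemma regular_or_biregular (h : IsEdgeScaling a α) (hα : ∀ i, α i ≠ 0)
    (hsymm : ∀ k i, a k i = a i k) (hconn : Connected a) :
    GraphRegular a ∨ GraphBiregular a := by
  obtain ⟨x, y, hxy⟩ := exists_alternating_values hsymm hconn
    fun i j k hik hjk => (h k i hik).trans (h k j hjk).symm
  have hdeg : ∀ i, (α i = x ∧ deg a i = y / x ^ 2) ∨ (α i = y ∧ deg a i = x / y ^ 2) := by
    intro i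
    obtain ⟨k, hki⟩ := exists_neighbor hconn i
    rw [h.deg_eq (hα i) hki]
    rcases hxy i with ⟨hi, hnext⟩ | ⟨hi, hnext⟩
    · exact .inl ⟨hi, by rw [hi, hnext k hki]⟩
    · exact .inr ⟨hi, by rw [hi, hnext k hki]⟩
  by_cases hne : x = y
  · subst hne
    exact .inl ⟨x / x ^ 2, fun i => (hdeg i).elim And.right And.right⟩
  refine .inr ⟨{i | α i = x}, y / x ^ 2, x / y ^ 2, fun i hi => ?_, fun i hi => ?_,
    fun i k hki => ?_⟩
  · exact ((hdeg i).resolve_right fun hy => hne (hi.symm.trans hy.1)).2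
  · exact ((hdeg i).resolve_left fun hx => hi hx.1).2
  · rcases hxy i with ⟨hi, hnext⟩ | ⟨hi, hnext⟩
    · exact .inl ⟨hi, fun hk => hne (hk.symm.trans (hnext k hki))⟩
    · exact .inr ⟨fun hi' => hne (hi'.symm.trans hi), hnext k hki⟩

end IsEdgeScaling

lemma exists_pos_mutual_sq_mul {d₁ d₂ : ℝ} (h₁ : 0 < d₁) (h₂ : 0 < d₂) :
    ∃ x y : ℝ, 0 < x ∧ 0 < y ∧ y = x ^ 2 * d₁ ∧ x = y ^ 2 * d₂ := by
  have hpos : 0 < (d₁ ^ 2 * d₂)⁻¹ := by positivity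
  set x : ℝ := (d₁ ^ 2 * d₂)⁻¹ ^ ((3 : ℕ)⁻¹ : ℝ)
  have hx : 0 < x := Real.rpow_pos_of_pos hpos _
  have hcube : x ^ 3 * (d₁ ^ 2 * d₂) = 1 := by
    rw [Real.rpow_inv_natCast_pow hpos.le three_ne_zero, inv_mul_cancel₀ (by positivity)]
  exact ⟨x, x ^ 2 * d₁, hx, by positivity, rfl, by linear_combination -x * hcube⟩

lemma GraphRegular.exists_isEdgeScaling (hreg : GraphRegular a) (hdeg : ∀ i, 0 < deg a i) :
    ∃ (α : ℕ → ℝ) (m M : ℝ), 0 < m ∧ (∀ i, m ≤ ‖α i‖) ∧ (∀ i, ‖α i‖ ≤ M) ∧ IsEdgeScaling a α := by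
  obtain ⟨d, hd⟩ := hreg
  have hd0 : 0 < d := hd 0 ▸ hdeg 0
  refine ⟨fun _ => d⁻¹, ‖d⁻¹‖, ‖d⁻¹‖, norm_pos_iff.mpr (inv_ne_zero hd0.ne'), fun _ => le_rfl,
    fun _ => le_rfl, fun i k _ => ?_⟩
  rw [hd i]
  field_simp

lemma GraphBiregular.exists_isEdgeScaling (hbi : GraphBiregular a) (hconn : Connected a)
    (hdeg : ∀ i, 0 < deg a i) :
    ∃ (α : ℕ → ℝ) (m M : ℝ), 0 < m ∧ (∀ i, m ≤ ‖α i‖) ∧ (∀ i, ‖α i‖ ≤ M) ∧ IsEdgeScaling a α := by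
  classical
  obtain ⟨V, d₁, d₂, hV, hVc, hedge⟩ := hbi
  obtain ⟨k, hk⟩ := exists_neighbor hconn 0
  obtain ⟨i, hi⟩ : ∃ i, i ∈ V := (hedge 0 k hk).elim (fun h => ⟨0, h.1⟩) (fun h => ⟨k, h.2⟩)
  obtain ⟨j, hj⟩ : ∃ j, j ∉ V := (hedge 0 k hk).elim (fun h => ⟨k, h.2⟩) (fun h => ⟨0, h.1⟩)
  obtain ⟨x, y, hx, hy, hyx, hxy⟩ :=
    exists_pos_mutual_sq_mul (hV i hi ▸ hdeg i) (hVc j hj ▸ hdeg j)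
  refine ⟨fun i => if i ∈ V then x else y, min ‖x‖ ‖y‖, max ‖x‖ ‖y‖,
    lt_min (norm_pos_iff.mpr hx.ne') (norm_pos_iff.mpr hy.ne'), fun i => ?_, fun i => ?_,
    fun i k hki => ?_⟩
  · rw [apply_ite norm]
    exact inf_le_ite _ _ _
  · rw [apply_ite norm]
    exact ite_le_sup _ _ _
  · dsimp only
    rcases hedge i k hki with ⟨hi, hk⟩ | ⟨hi, hk⟩
    · rw [if_pos hi, if_neg hk, hV i hi, ← hyx]
    · rw [if_neg hi, if_pos hk, hVc i hi, ← hxy]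

end Graph

theorem unitary_iso_criterion_general
    (a : ℕ → ℕ → ℝ)
    (hadj : SimpleAdj a) (hconn : Connected a) (hlf : GraphLocallyFinite a) :
    ((GraphRegular a ∨ GraphBiregular a) →
      ∃ (f : l2 ≃L[ℝ] l2) (π : Equiv.Perm ℕ) (α : ℕ → ℝ),
        (∀ i, α i ≠ 0) ∧
        (∀ i, f (delta i) = α i • delta (π i)) ∧
        (∀ v w p q : l2, IsRWProd a v w p → IsStarProd a (f v) (f w) q → f p = q) ∧
        ∃ U : l2 ≃ₗᵢ[ℝ] l2,
          (∀ i, U (delta i) = delta (π i)) ∧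
          (∀ v w p q : l2,
            IsTildeProd a α v w p → IsStarProd a (U v) (U w) q → U p = q)) ∧
    ((∃ (f : l2 ≃L[ℝ] l2) (π : Equiv.Perm ℕ) (α : ℕ → ℝ),
        (∀ i, α i ≠ 0) ∧
        (∀ i, f (delta i) = α i • delta (π i)) ∧
        (∀ v w p q : l2, IsRWProd a v w p → IsStarProd a (f v) (f w) q → f p = q)) →
      GraphRegular a ∨ GraphBiregular a) := by
  obtain ⟨h01, hsymm, -⟩ := hadj
  constructor
  · intro h
    have hdeg (i : ℕ) : 0 < deg a i := (exists_neighbor hconn i).elim fun _ => deg_pos h01 hlf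
    obtain ⟨α, m, M, hm, hmα, hαM, hscale⟩ := h.elim
      (fun hreg => hreg.exists_isEdgeScaling hdeg) (fun hbi => hbi.exists_isEdgeScaling hconn hdeg)
    have hα (i : ℕ) : α i ≠ 0 := norm_pos_iff.mp (hm.trans_le (hmα i))
    obtain ⟨f, hf⟩ : ∃ f : l2 ≃L[ℝ] l2, ∀ v i, f v i = α i • v i :=
      exists_diagonal_continuousLinearEquiv 2 hm hmα hαM
    exact ⟨f, .refl ℕ, α, hα, fun i => apply_single_of_diagonal hf i 1,
      fun _ _ _ _ hp hq =>
        IsEvolutionProd.unique (hscale.isStarProd_of_isRWProd h01 hlf hf hp) hq,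
      .refl ℝ l2, fun _ => rfl,
      fun _ _ _ _ hp hq =>
        IsEvolutionProd.unique (hscale.isStarProd_of_isTildeProd hα h01 hlf hp) hq⟩
  · rintro ⟨f, π, α, hα, hf, hmul⟩
    have hcol := memℓp_adj_column h01 hlf
    have hcolRW (i : ℕ) : Memℓp (fun k => a k i / deg a i) 2 := by
      simpa only [div_eq_inv_mul] using (hcol i).const_mul (deg a i)⁻¹
    have hscale : IsEdgeScaling a α := isEdgeScaling_of_structureConst_eq h01 hlf hα <|
      structureConst_eq_of_mul_preserving (f := (f : l2 →L[ℝ] l2)) ENNReal.ofNat_ne_top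
        π.injective hcolRW hcol hf hmul
    exact hscale.regular_or_biregular hα hsymm hconn

/-- for a connected graph with uniformly bounded degree and degrees ≥ 1:
if the graph is regular or biregular, then there is an isomorphism
`f(δ_i) = α_i δ_{π(i)}` of Hilbert evolution algebras from `A_RW(G)` to `A(G)`, and the
linear isometric equivalence `U(δ_i) = δ_{π(i)}` is a unitary isomorphism from ℓ²(ℕ) with
the twisted product `·̃` onto `A(G)`; conversely, if moreover the graph is non-singular
and some isomorphism from `A_RW(G)` to `A(G)` of the form `f(δ_i) = α_i δ_{π(i)}` exists,
then the graph is regular or biregular. -/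
theorem unitary_iso_criterion
    (a : ℕ → ℕ → ℝ)
    (hadj : SimpleAdj a) (hconn : Connected a)
    (hlf : GraphLocallyFinite a) (hubd : UnifBoundedDegree a)
    (hdeg : ∀ i, 1 ≤ deg a i) :
    ((GraphRegular a ∨ GraphBiregular a) →
      ∃ (f : l2 ≃L[ℝ] l2) (π : Equiv.Perm ℕ) (α : ℕ → ℝ),
        (∀ i, α i ≠ 0) ∧
        (∀ i, f (delta i) = α i • delta (π i)) ∧
        (∀ v w p q : l2, IsRWProd a v w p → IsStarProd a (f v) (f w) q → f p = q) ∧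
        ∃ U : l2 ≃ₗᵢ[ℝ] l2,
          (∀ i, U (delta i) = delta (π i)) ∧
          (∀ v w p q : l2,
            IsTildeProd a α v w p → IsStarProd a (U v) (U w) q → U p = q)) ∧
    (NonSingular a →
      (∃ (f : l2 ≃L[ℝ] l2) (π : Equiv.Perm ℕ) (α : ℕ → ℝ),
        (∀ i, α i ≠ 0) ∧
        (∀ i, f (delta i) = α i • delta (π i)) ∧
        (∀ v w p q : l2, IsRWProd a v w p → IsStarProd a (f v) (f w) q → f p = q)) →
      GraphRegular a ∨ GraphBiregular a) :=
  let ⟨hexists, hregular⟩ := unitary_iso_criterion_general a hadj hconn hlf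
  ⟨hexists, fun _ => hregular⟩
end
end

section
/- Let G be a locally finite graph on ℕ with deg(i) ≥ 1 for all i. For sequences v, w : ℕ → ℝ with ∑_i v_i² deg(i) < ∞ and ∑_i w_i² deg(i) < ∞, define u_k = ∑_i v_i w_i a_{ki}/deg(k)^{1/2}. Then each series defining u_k converges, and ∑_k u_k² deg(k) ≤ (∑_i v_i²) · (∑_i w_i² deg(i)); in particular, the weighted space A_d = {v : ∑_i v_i² deg(i) < ∞} with norm ‖v‖_d = (∑_i v_i² deg(i))^{1/2} is closed under the product v · w = u, and each left multiplication L_v is a bounded operator on A_d with ‖L_v w‖_d ≤ ‖v‖ ‖w‖_d, where ‖v‖ is the unweighted ℓ² norm. -/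
noncomputable section

/-!
Cauchy–Schwarz with the weight `a k i` kept on one factor only, which is allowed because
`a k i ^ 2 ≤ a k i`, gives `u_k² deg k ≤ (∑ᵢ vᵢ²) (∑ᵢ wᵢ² a k i)`; the factor `deg k` cancels the
normalization of the product. Summing over `k` and exchanging the two sums of nonnegative terms
turns the last factor into `∑ᵢ wᵢ² deg i`.
-/

section Series

variable {ι κ : Type*}

theorem summable_of_sq_le_mul {r f g : ι → ℝ} (hf_nonneg : ∀ i, 0 ≤ f i)
    (hg_nonneg : ∀ i, 0 ≤ g i) (hr : ∀ i, r i ^ 2 ≤ f i * g i) (hf : Summable f)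
    (hg : Summable g) : Summable r := by
  refine Summable.of_norm_bounded (hf.add hg) fun i => ?_
  have two_mul_abs_le : 2 * |r i| ≤ f i + g i :=
    two_mul_le_add_of_sq_le_mul (hf_nonneg i) (hg_nonneg i) ((sq_abs (r i)).trans_le (hr i))
  rw [Real.norm_eq_abs]
  linarith [abs_nonneg (r i)]

theorem sq_tsum_le_tsum_mul_tsum_of_sq_le_mul {r f g : ι → ℝ} (hf_nonneg : ∀ i, 0 ≤ f i)
    (hg_nonneg : ∀ i, 0 ≤ g i) (hr : ∀ i, r i ^ 2 ≤ f i * g i) (hf : Summable f)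
    (hg : Summable g) : (∑' i, r i) ^ 2 ≤ (∑' i, f i) * ∑' i, g i :=
  le_of_tendsto_of_tendsto'
    ((summable_of_sq_le_mul hf_nonneg hg_nonneg hr hf hg).hasSum.pow 2)
    (Filter.Tendsto.mul hf.hasSum hg.hasSum) fun s =>
      s.sum_sq_le_sum_mul_sum_of_sq_le_mul (fun i _ => hf_nonneg i) (fun i _ => hg_nonneg i)
        fun i _ => hr i

theorem summable_uncurry_of_nonneg {f : ι → κ → ℝ} (hf_nonneg : ∀ i k, 0 ≤ f i k)
    (hf : ∀ i, Summable (f i)) (hsum : Summable fun i => ∑' k, f i k) :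
    Summable (Function.uncurry f) :=
  (summable_prod_of_nonneg fun p => hf_nonneg p.1 p.2).2 ⟨hf, hsum⟩

theorem hasSum_tsum_comm_of_nonneg {f : ι → κ → ℝ} (hf_nonneg : ∀ i k, 0 ≤ f i k)
    (hf : ∀ i, Summable (f i)) (hsum : Summable fun i => ∑' k, f i k) :
    HasSum (fun k => ∑' i, f i k) (∑' i, ∑' k, f i k) := by
  have hjoint := summable_uncurry_of_nonneg hf_nonneg hf hsum
  rw [← hjoint.tsum_comm]
  exact hjoint.prod_symm.prod.hasSum

theorem summable_sq_of_summable_sq_mul {x d : ι → ℝ} (hd : ∀ i, 1 ≤ d i)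
    (hx : Summable fun i => x i ^ 2 * d i) : Summable fun i => x i ^ 2 :=
  hx.of_nonneg_of_le (fun i => sq_nonneg (x i)) fun i =>
    le_mul_of_one_le_right (sq_nonneg (x i)) (hd i)

end Series

section UnitIntervalWeight

variable {ι : Type*} {α v w : ι → ℝ}

theorem sq_mul_mul_le_of_mem_Icc {t : ℝ} (ht : t ∈ Set.Icc (0 : ℝ) 1) (x y : ℝ) :
    (x * y * t) ^ 2 ≤ x ^ 2 * (y ^ 2 * t) :=
  calc (x * y * t) ^ 2 = (x * y) ^ 2 * t ^ 2 := mul_pow _ _ _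
    _ ≤ (x * y) ^ 2 * t := by
      gcongr
      exact pow_le_of_le_one ht.1 ht.2 two_ne_zero
    _ = x ^ 2 * (y ^ 2 * t) := by ring

theorem summable_mul_mul_of_mem_Icc (hα : ∀ i, α i ∈ Set.Icc (0 : ℝ) 1)
    (hv : Summable fun i => v i ^ 2) (hw : Summable fun i => w i ^ 2 * α i) :
    Summable fun i => v i * w i * α i :=
  summable_of_sq_le_mul (fun i => sq_nonneg (v i)) (fun i => mul_nonneg (sq_nonneg (w i)) (hα i).1)
    (fun i => sq_mul_mul_le_of_mem_Icc (hα i) (v i) (w i)) hv hw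

theorem sq_tsum_mul_mul_le_of_mem_Icc (hα : ∀ i, α i ∈ Set.Icc (0 : ℝ) 1)
    (hv : Summable fun i => v i ^ 2) (hw : Summable fun i => w i ^ 2 * α i) :
    (∑' i, v i * w i * α i) ^ 2 ≤ (∑' i, v i ^ 2) * ∑' i, w i ^ 2 * α i :=
  sq_tsum_le_tsum_mul_tsum_of_sq_le_mul (fun i => sq_nonneg (v i))
    (fun i => mul_nonneg (sq_nonneg (w i)) (hα i).1)
    (fun i => sq_mul_mul_le_of_mem_Icc (hα i) (v i) (w i)) hv hw

end UnitIntervalWeight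

section EvolutionProduct

variable {ι κ : Type*} {a : κ → ι → ℝ} {d : κ → ℝ} {v w : ι → ℝ}

/-- The product `(v · w)_k = ∑ᵢ vᵢ wᵢ c_{ki}` of the evolution algebra with structure constants
`c_{ki} = a_{ki} / √d_k`. The normalizing weight `d` is a free parameter, and rows and columns of
`a` may be indexed by different types; a graph has `d = deg a`. -/
def evolutionProduct (a : κ → ι → ℝ) (d : κ → ℝ) (v w : ι → ℝ) (k : κ) : ℝ :=
  ∑' i, v i * w i * a k i / √(d k)

theorem evolutionProduct_sq_mul {k : κ} (hd : 0 < d k) :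
    evolutionProduct a d v w k ^ 2 * d k = (∑' i, v i * w i * a k i) ^ 2 := by
  rw [evolutionProduct, tsum_div_const, div_pow, Real.sq_sqrt hd.le, div_mul_cancel₀ _ hd.ne']

theorem weighted_evolution_algebra_product_bound_general
    (ha : ∀ k i, a k i ∈ Set.Icc (0 : ℝ) 1) (hcol : ∀ i, Summable fun k => a k i)
    (hd : ∀ k, 0 < d k) (hv : Summable fun i => v i ^ 2)
    (hw : Summable fun i => w i ^ 2 * ∑' k, a k i) :
    (∀ k, Summable fun i => v i * w i * a k i / √(d k)) ∧
    (Summable fun k => evolutionProduct a d v w k ^ 2 * d k) ∧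
    (∑' k, evolutionProduct a d v w k ^ 2 * d k ≤
      (∑' i, v i ^ 2) * ∑' i, w i ^ 2 * ∑' k, a k i) ∧
    √(∑' k, evolutionProduct a d v w k ^ 2 * d k) ≤
      √(∑' i, v i ^ 2) * √(∑' i, w i ^ 2 * ∑' k, a k i) := by
  have hnonneg : ∀ i k, 0 ≤ w i ^ 2 * a k i := fun i k => mul_nonneg (sq_nonneg (w i)) (ha k i).1
  have hcol_mul : ∀ i, Summable fun k => w i ^ 2 * a k i := fun i => (hcol i).mul_left (w i ^ 2)
  simp only [← tsum_mul_left (a := w _ ^ 2)] at hw ⊢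
  have hrow : ∀ k, Summable fun i => w i ^ 2 * a k i :=
    (summable_uncurry_of_nonneg hnonneg hcol_mul hw).prod_symm.prod_factor
  have hterm : ∀ k, evolutionProduct a d v w k ^ 2 * d k ≤
      (∑' i, v i ^ 2) * ∑' i, w i ^ 2 * a k i := fun k =>
    (evolutionProduct_sq_mul (hd k)).trans_le (sq_tsum_mul_mul_le_of_mem_Icc (ha k) hv (hrow k))
  have hmajorant := (hasSum_tsum_comm_of_nonneg hnonneg hcol_mul hw).mul_left (∑' i, v i ^ 2)
  have hsum : Summable fun k => evolutionProduct a d v w k ^ 2 * d k :=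
    hmajorant.summable.of_nonneg_of_le (fun k => mul_nonneg (sq_nonneg _) (hd k).le) hterm
  have hbound := hasSum_le hterm hsum.hasSum hmajorant
  refine ⟨fun k => (summable_mul_mul_of_mem_Icc (ha k) hv (hrow k)).div_const _, hsum, hbound, ?_⟩
  rw [← Real.sqrt_mul (tsum_nonneg fun i => sq_nonneg (v i))]
  exact Real.sqrt_le_sqrt hbound

end EvolutionProduct

/-- let `G` be a locally finite graph on ℕ with all degrees ≥ 1. For
sequences `v, w` in the weighted space `A_d` (i.e. `∑ v_i² deg(i) < ∞`,
`∑ w_i² deg(i) < ∞`), the product `u_k = ∑_i v_i w_i a_{ki}/deg(k)^{1/2}` is defined by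
convergent series and satisfies `∑_k u_k² deg(k) ≤ (∑_i v_i²)·(∑_i w_i² deg(i))`; hence
`A_d` is closed under the product and `‖L_v w‖_d ≤ ‖v‖ ‖w‖_d` (with `‖v‖` the unweighted
ℓ² norm). -/
theorem weighted_evolution_algebra_product_bound
    (a : ℕ → ℕ → ℝ)
    (hval : ∀ k i, a k i = 0 ∨ a k i = 1)
    (hsym : ∀ k i, a k i = a i k)
    (hloop : ∀ i, a i i = 0)
    (hlf : ∀ i, Summable fun k => a k i)
    (hdeg : ∀ i, 1 ≤ deg a i)
    (v w : ℕ → ℝ)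
    (hv : Summable fun i => v i ^ 2 * deg a i)
    (hw : Summable fun i => w i ^ 2 * deg a i) :
    (∀ k, Summable fun i => v i * w i * a k i / Real.sqrt (deg a k)) ∧
    (Summable fun k =>
      (∑' i, v i * w i * a k i / Real.sqrt (deg a k)) ^ 2 * deg a k) ∧
    (∑' k, (∑' i, v i * w i * a k i / Real.sqrt (deg a k)) ^ 2 * deg a k ≤
      (∑' i, v i ^ 2) * (∑' i, w i ^ 2 * deg a i)) ∧
    (Real.sqrt (∑' k, (∑' i, v i * w i * a k i / Real.sqrt (deg a k)) ^ 2 * deg a k) ≤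
      Real.sqrt (∑' i, v i ^ 2) * Real.sqrt (∑' i, w i ^ 2 * deg a i)) :=
  weighted_evolution_algebra_product_bound_general
    (fun k i => by rcases hval k i with h | h <;> simp [h]) hlf
    (fun k => zero_lt_one.trans_le (hdeg k)) (summable_sq_of_summable_sq_mul hdeg hv) hw
end
end
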